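/- arXiv:1004.2605 — 6 statements merged into one kernel-verified Lean document; each statement's English description precedes it below -/
import Mathlib

section
/- For any integers d, k with 2 ≤ d and 2d ≤ k (i.e. d ≤ k/2), we have M(d,k) ≤ M(d+1,k). That is, increasing the dimension does not decrease McMullen's bound as long as there are sufficiently many facets. -/
/-- McMullen's upper bound `M(d,k)`, defined for integers `2 ≤ d < k` as
`C(k − ⌊(d+1)/2⌋, k − d) + C(k − ⌊(d+2)/2⌋, k − d)`.  Note that `Nat.choose`
already implements the convention `C(a,b) = 0` unless `0 ≤ b ≤ a`. -/
def mcmullen (d k : ℕ) : ℕ :=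
  Nat.choose (k - (d + 1) / 2) (k - d) + Nat.choose (k - (d + 2) / 2) (k - d)

/-!
For `d = 2r + 2` and `d = 2r + 3`, Pascal's rule cancels the common part of `M(d, k)` and
`M(d + 1, k)`. What is left is `2 C(n, r) ≤ C(n, r + 1)` with `n = k - r - 2`, respectively
`2 C(n, r) ≤ C(n, r + 2)` with `n = k - r - 3`. Both follow from
`C(n, r + 1) / C(n, r) = (n - r) / (r + 1)`, as `2d ≤ k` gives `n ≥ 3r + 2`, respectively
`n ≥ 3r + 3`.
-/

theorem mul_choose_le_choose_succ {c n r : ℕ} (h : c * (r + 1) + r ≤ n) :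
    c * n.choose r ≤ n.choose (r + 1) := by
  have ratio_ge : c * (r + 1) ≤ n - r := by lia
  refine Nat.le_of_mul_le_mul_right ?_ r.succ_pos
  calc c * n.choose r * (r + 1) = n.choose r * (c * (r + 1)) := by ring
    _ ≤ n.choose r * (n - r) := Nat.mul_le_mul_left _ ratio_ge
    _ = n.choose (r + 1) * (r + 1) := (Nat.choose_succ_right_eq n r).symm

theorem two_mul_choose_le_choose_add_two {n r : ℕ} (h : 3 * r + 3 ≤ n) :
    2 * n.choose r ≤ n.choose (r + 2) :=
  calc 2 * n.choose r ≤ n.choose (r + 1) := mul_choose_le_choose_succ (by lia)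
    _ = 1 * n.choose (r + 1) := (one_mul _).symm
    _ ≤ n.choose (r + 2) := mul_choose_le_choose_succ (by lia)

theorem mcmullen_two_mul_add_one {n r : ℕ} (h : r ≤ n) :
    mcmullen (2 * r + 1) (n + r + 1) = 2 * n.choose r := by
  have upper_fst : n + r + 1 - (2 * r + 1 + 1) / 2 = n := by lia
  have upper_snd : n + r + 1 - (2 * r + 1 + 2) / 2 = n := by lia
  have lower : n + r + 1 - (2 * r + 1) = n - r := by lia
  rw [mcmullen, upper_fst, upper_snd, lower, Nat.choose_symm h, two_mul]

theorem mcmullen_two_mul_add_two {n r : ℕ} (h : r ≤ n) :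
    mcmullen (2 * r + 2) (n + r + 2) = (n + 1).choose (r + 1) + n.choose r := by
  have upper_fst : n + r + 2 - (2 * r + 2 + 1) / 2 = n + 1 := by lia
  have upper_snd : n + r + 2 - (2 * r + 2 + 2) / 2 = n := by lia
  have lower : n + r + 2 - (2 * r + 2) = n - r := by lia
  rw [mcmullen, upper_fst, upper_snd, lower, Nat.choose_symm h,
    Nat.choose_symm_of_eq_add (show n + 1 = (n - r) + (r + 1) by lia)]

theorem mcmullen_two_mul_add_two_le {n r : ℕ} (h : 3 * r + 2 ≤ n) :
    mcmullen (2 * r + 2) (n + r + 2) ≤ mcmullen (2 * r + 3) (n + r + 2) :=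
  calc mcmullen (2 * r + 2) (n + r + 2) = (n + 1).choose (r + 1) + n.choose r :=
        mcmullen_two_mul_add_two (by lia)
    _ = 2 * n.choose r + n.choose (r + 1) := by rw [Nat.choose_succ_succ']; ring
    _ ≤ n.choose (r + 1) + n.choose (r + 1) := by
        gcongr
        exact mul_choose_le_choose_succ (by lia)
    _ = 2 * n.choose (r + 1) := (two_mul _).symm
    _ = mcmullen (2 * r + 3) (n + r + 2) := (mcmullen_two_mul_add_one (r := r + 1) (by lia)).symm

theorem mcmullen_two_mul_add_three_le {n r : ℕ} (h : 3 * r + 3 ≤ n) :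
    mcmullen (2 * r + 3) (n + r + 3) ≤ mcmullen (2 * r + 4) (n + r + 3) :=
  calc mcmullen (2 * r + 3) (n + r + 3) = 2 * (n + 1).choose (r + 1) := by
        rw [show n + r + 3 = (n + 1) + (r + 1) + 1 by ring]
        exact mcmullen_two_mul_add_one (by lia)
    _ = 2 * n.choose r + 2 * n.choose (r + 1) := by rw [Nat.choose_succ_succ']; ring
    _ ≤ n.choose (r + 2) + 2 * n.choose (r + 1) := by
        gcongr
        exact two_mul_choose_le_choose_add_two h
    _ = (n + 1).choose (r + 2) + n.choose (r + 1) := by rw [Nat.choose_succ_succ' n (r + 1)]; ring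
    _ = mcmullen (2 * r + 4) (n + r + 3) := (mcmullen_two_mul_add_two (r := r + 1) (by lia)).symm

theorem stmt_2 (d k : ℕ) (h2 : 2 ≤ d) (hdk : 2 * d ≤ k) :
    mcmullen d k ≤ mcmullen (d + 1) k := by
  obtain ⟨e, rfl⟩ := Nat.exists_eq_add_of_le' h2
  rcases Nat.even_or_odd' e with ⟨r, rfl | rfl⟩
  · obtain ⟨n, rfl⟩ : ∃ n, k = n + r + 2 := ⟨k - (r + 2), by lia⟩
    exact mcmullen_two_mul_add_two_le (by lia)
  · obtain ⟨n, rfl⟩ : ∃ n, k = n + r + 3 := ⟨k - (r + 3), by lia⟩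
    exact mcmullen_two_mul_add_three_le (by lia)
end

section
/- For any real α with 0 < α ≤ 1 and any integer k > 2, the following identity holds: ∑_{d=2}^{k−1} α^d · M(d,k) = S_{α²}(k) + α²·S_{α²}(k−2) + 2α·S_{α²}(k−1) − 2α^k − 2α − 1. -/
/-- The sum `S_β(m) = ∑_{i=0}^{⌊m/2⌋} β^i · C(m − i, i)`. -/
noncomputable def Ssum (β : ℝ) (m : ℕ) : ℝ :=
  ∑ i ∈ Finset.range (m / 2 + 1), β ^ i * (Nat.choose (m - i) i : ℝ)

/-!
Write `H(d,k) = C(k - ⌈d/2⌉, k - d)`. Passing from `(d,k)` to `(d-1,k-1)` turns the first binomial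
coefficient of McMullen's bound into the second, so `M(d,k) = H(d,k) + H(d-1,k-1)` for `d ≥ 1`,
while `M(0,k) = H(0,k)`. By symmetry of binomial coefficients `H(2i,k) = H(2i+1,k+1) = C(k-i,i)`,
so splitting `T(k) = ∑_{d ≤ k} a^d H(d,k)` by the parity of `d` gives `T(k) = S(k) + a S(k-1)`,
where `S = S_{a²}`. Hence
`∑_{d ≤ k} a^d M(d,k) = T(k) + a T(k-1) = S(k) + 2a S(k-1) + a² S(k-2)`,
from which the terms `d = 0, 1, k`, namely `1`, `2a` and `2a^k`, are removed.
-/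

open Finset

theorem sum_range_eq_sum_even_add_sum_odd {M : Type*} [AddCommMonoid M] (f : ℕ → M) (n : ℕ) :
    ∑ d ∈ range n, f d =
      ∑ i ∈ range ((n + 1) / 2), f (2 * i) + ∑ i ∈ range (n / 2), f (2 * i + 1) := by
  induction n with
  | zero => simp
  | succ n ih =>
    rw [sum_range_succ, ih]
    obtain ⟨m, rfl | rfl⟩ := n.even_or_odd'
    · rw [show (2 * m + 1 + 1) / 2 = m + 1 by lia, show (2 * m + 1) / 2 = m by lia,
        show 2 * m / 2 = m by lia, sum_range_succ, add_right_comm]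
    · rw [show (2 * m + 1 + 1 + 1) / 2 = m + 1 by lia, show (2 * m + 1 + 1) / 2 = m + 1 by lia,
        show (2 * m + 1) / 2 = m by lia, sum_range_succ (fun i ↦ f (2 * i + 1)), add_assoc]

/-- The first summand `C(k - ⌈d/2⌉, k - d)` of McMullen's bound `M(d,k)`; for `d ≥ 1` the
second summand is its value at `(d - 1, k - 1)`. -/
def mcmullenHalf (d k : ℕ) : ℕ :=
  (k - (d + 1) / 2).choose (k - d)

theorem mcmullenHalf_even {i k : ℕ} (h : 2 * i ≤ k) :
    mcmullenHalf (2 * i) k = (k - i).choose i := by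
  rw [mcmullenHalf, show (2 * i + 1) / 2 = i by lia]
  exact (Nat.choose_symm_of_eq_add (by lia)).symm

theorem mcmullenHalf_odd_succ (i k : ℕ) :
    mcmullenHalf (2 * i + 1) (k + 1) = mcmullenHalf (2 * i) k := by
  rw [mcmullenHalf, mcmullenHalf]
  congr 1 <;> lia

theorem mcmullen_succ_succ (d k : ℕ) :
    mcmullen (d + 1) (k + 1) = mcmullenHalf (d + 1) (k + 1) + mcmullenHalf d k := by
  rw [mcmullen, mcmullenHalf, mcmullenHalf]
  congr 2 <;> lia

theorem mcmullen_zero_succ (k : ℕ) : mcmullen 0 (k + 1) = mcmullenHalf 0 (k + 1) := by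
  simp [mcmullen, mcmullenHalf]

theorem mcmullenHalf_zero (k : ℕ) : mcmullenHalf 0 k = 1 := by
  simp [mcmullenHalf]

theorem mcmullen_one (k : ℕ) : mcmullen 1 k = 2 := by
  simp [mcmullen]

theorem mcmullen_self (k : ℕ) : mcmullen k k = 2 := by
  simp [mcmullen]

section CommSemiring

variable {R : Type*} [CommSemiring R]

/-- The sum `S_x(m) = ∑_{i ≤ m/2} x^i C(m - i, i)` along a diagonal of Pascal's triangle, over any
commutative semiring; `Ssum` is the real case. -/
def diagonalChooseSum (x : R) (m : ℕ) : R :=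
  ∑ i ∈ range (m / 2 + 1), x ^ i * ((m - i).choose i : R)

theorem sum_pow_mul_mcmullenHalf_even (a : R) (k : ℕ) :
    ∑ i ∈ range (k / 2 + 1), a ^ (2 * i) * (mcmullenHalf (2 * i) k : R) =
      diagonalChooseSum (a ^ 2) k := by
  refine sum_congr rfl fun i hi ↦ ?_
  rw [mem_range] at hi
  rw [mcmullenHalf_even (by lia), pow_mul]

theorem sum_pow_mul_mcmullenHalf (a : R) (k : ℕ) :
    ∑ d ∈ range (k + 2), a ^ d * (mcmullenHalf d (k + 1) : R) =
      diagonalChooseSum (a ^ 2) (k + 1) + a * diagonalChooseSum (a ^ 2) k := by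
  rw [sum_range_eq_sum_even_add_sum_odd, Nat.add_div_right k two_pos,
    show (k + 2 + 1) / 2 = (k + 1) / 2 + 1 by lia, sum_pow_mul_mcmullenHalf_even]
  simp only [mcmullenHalf_odd_succ, pow_succ' a (2 * _), mul_assoc]
  rw [← mul_sum, sum_pow_mul_mcmullenHalf_even]

theorem sum_pow_mul_mcmullen_succ (a : R) (k : ℕ) :
    ∑ d ∈ range (k + 2), a ^ d * (mcmullen d (k + 1) : R) =
      ∑ d ∈ range (k + 2), a ^ d * (mcmullenHalf d (k + 1) : R) +
        a * ∑ d ∈ range (k + 1), a ^ d * (mcmullenHalf d k : R) := by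
  rw [sum_range_succ', sum_range_succ' _ (k + 1), mcmullen_zero_succ, mul_sum, add_right_comm,
    ← sum_add_distrib]
  congr 1
  refine sum_congr rfl fun d _ ↦ ?_
  rw [mcmullen_succ_succ, Nat.cast_add, mul_add, pow_succ' a d,
    mul_assoc a _ (mcmullenHalf d k : R)]

theorem sum_pow_mul_mcmullen (a : R) (k : ℕ) :
    ∑ d ∈ range (k + 3), a ^ d * (mcmullen d (k + 2) : R) =
      diagonalChooseSum (a ^ 2) (k + 2) + a ^ 2 * diagonalChooseSum (a ^ 2) k +
        2 * a * diagonalChooseSum (a ^ 2) (k + 1) := by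
  rw [sum_pow_mul_mcmullen_succ, sum_pow_mul_mcmullenHalf, sum_pow_mul_mcmullenHalf]
  ring

theorem sum_range_pow_mul_mcmullen_eq_add_sum_Icc (a : R) (k : ℕ) :
    ∑ d ∈ range (k + 3), a ^ d * (mcmullen d (k + 2) : R) =
      1 + 2 * a + ∑ d ∈ Icc 2 (k + 1), a ^ d * (mcmullen d (k + 2) : R) + 2 * a ^ (k + 2) := by
  have first_terms : ∑ d ∈ range 2, a ^ d * (mcmullen d (k + 2) : R) = 1 + 2 * a := by
    simp [sum_range_succ, mcmullen_zero_succ, mcmullenHalf_zero, mcmullen_one, mul_comm]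
  rw [sum_range_succ, ← sum_range_add_sum_Ico _ (Nat.le_add_left 2 k), first_terms, mcmullen_self,
    Nat.cast_ofNat, mul_comm (a ^ (k + 2)),
    show Ico 2 (k + 2) = Icc 2 (k + 1) from Ico_add_one_right_eq_Icc 2 (k + 1)]

end CommSemiring

theorem Ssum_eq_diagonalChooseSum (β : ℝ) (m : ℕ) : Ssum β m = diagonalChooseSum β m := rfl

theorem stmt_7_general {R : Type*} [CommRing R] (a : R) {k : ℕ} (hk : 2 ≤ k) :
    ∑ d ∈ Icc 2 (k - 1), a ^ d * (mcmullen d k : R) =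
      diagonalChooseSum (a ^ 2) k + a ^ 2 * diagonalChooseSum (a ^ 2) (k - 2) +
        2 * a * diagonalChooseSum (a ^ 2) (k - 1) - 2 * a ^ k - 2 * a - 1 := by
  obtain ⟨n, rfl⟩ := Nat.exists_eq_add_of_le' hk
  rw [Nat.add_sub_cancel, show n + 2 - 1 = n + 1 from rfl, ← sum_pow_mul_mcmullen,
    sum_range_pow_mul_mcmullen_eq_add_sum_Icc]
  ring

theorem stmt_7 (α : ℝ) (hα₀ : 0 < α) (hα₁ : α ≤ 1) (k : ℕ) (hk : 2 < k) :
    ∑ d ∈ Finset.Icc 2 (k - 1), α ^ d * (mcmullen d k : ℝ) =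
      Ssum (α ^ 2) k + α ^ 2 * Ssum (α ^ 2) (k - 2) +
        2 * α * Ssum (α ^ 2) (k - 1) - 2 * α ^ k - 2 * α - 1 := by
  simpa only [Ssum_eq_diagonalChooseSum] using stmt_7_general α hk.le
end

section
/- Let F ⊆ ℝ^{3n} be a convex set contained in the non-negative orthant such that every point of F satisfies the quadrilateral constraints. Then any two points of F are compatible. -/
/-- A point of `ℝ^{3n}` (coordinates indexed by tetrahedron `i` and
quadrilateral type `j`) satisfies the *quadrilateral constraints* if for each
`i` at most one of the three coordinates `x (i, j)` is non-zero. -/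
def QuadOK {n : ℕ} (x : Fin n × Fin 3 → ℝ) : Prop :=
  ∀ i : Fin n, ∀ j j' : Fin 3, x (i, j) ≠ 0 → x (i, j') ≠ 0 → j = j'

/-- Two points `x, y` of `ℝ^{3n}` are *compatible* if for each `i` at most one
index `j` has `x (i, j) ≠ 0` or `y (i, j) ≠ 0`. -/
def Compat {n : ℕ} (x y : Fin n × Fin 3 → ℝ) : Prop :=
  ∀ i : Fin n, ∀ j j' : Fin 3,
    (x (i, j) ≠ 0 ∨ y (i, j) ≠ 0) → (x (i, j') ≠ 0 ∨ y (i, j') ≠ 0) → j = j'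

/-- The non-negative orthant of `ℝ^{3n}`. -/
def Orthant (n : ℕ) : Set (Fin n × Fin 3 → ℝ) := {x | ∀ p, 0 ≤ x p}

/-- An *admissible face* of `P`: an exposed face of `P` all of whose points
satisfy the quadrilateral constraints. -/
def AdmFace {n : ℕ} (P F : Set (Fin n × Fin 3 → ℝ)) : Prop :=
  IsExposed ℝ P F ∧ ∀ x ∈ F, QuadOK x

/-- A *maximal admissible face* of `P`: an admissible face of `P` that is not
strictly contained in any other admissible face of `P`. -/
def MaxAdmFace {n : ℕ} (P F : Set (Fin n × Fin 3 → ℝ)) : Prop :=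
  AdmFace P F ∧ ∀ G, AdmFace P G → ¬ F ⊂ G

open Function

section Support

variable {ι 𝕜 M : Type*}

theorem support_add_of_nonneg [AddZeroClass M] [PartialOrder M] [AddLeftMono M] [AddRightMono M]
    {x y : ι → M} (hx : 0 ≤ x) (hy : 0 ≤ y) : support (x + y) = support x ∪ support y := by
  ext p
  simp only [mem_support, Pi.add_apply, Set.mem_union, ne_eq,
    add_eq_zero_iff_of_nonneg (hx p) (hy p), not_and_or]

theorem support_eq_union_of_mem_openSegment [Semiring 𝕜] [IsDomain 𝕜] [PartialOrder 𝕜]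
    [AddCommMonoid M] [PartialOrder M] [IsOrderedAddMonoid M] [Module 𝕜 M]
    [Module.IsTorsionFree 𝕜 M] [PosSMulMono 𝕜 M] {x y z : ι → M} (hx : 0 ≤ x) (hy : 0 ≤ y)
    (hz : z ∈ openSegment 𝕜 x y) : support z = support x ∪ support y := by
  obtain ⟨a, b, ha, hb, -, rfl⟩ := hz
  rw [support_add_of_nonneg (smul_nonneg ha.le hx) (smul_nonneg hb.le hy),
    support_const_smul_of_ne_zero a x ha.ne', support_const_smul_of_ne_zero b y hb.ne']

end Support

theorem compat_iff_quadOK_of_support_eq_union {n : ℕ} {x y z : Fin n × Fin 3 → ℝ}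
    (hz : support z = support x ∪ support y) : Compat x y ↔ QuadOK z := by
  have ne_zero_iff (p : Fin n × Fin 3) : z p ≠ 0 ↔ x p ≠ 0 ∨ y p ≠ 0 := Set.ext_iff.mp hz p
  simp only [Compat, QuadOK, ne_zero_iff]

theorem stmt_9 {n : ℕ} (hn : 1 ≤ n) (F : Set (Fin n × Fin 3 → ℝ))
    (hconv : Convex ℝ F) (horth : F ⊆ Orthant n)
    (hadm : ∀ x ∈ F, QuadOK x) :
    ∀ x ∈ F, ∀ y ∈ F, Compat x y := by
  intro x hx y hy
  have hmid : midpoint ℝ x y ∈ openSegment ℝ x y := midpoint_mem_openSegment x y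
  have hsupp : support (midpoint ℝ x y) = support x ∪ support y :=
    support_eq_union_of_mem_openSegment (horth hx) (horth hy) hmid
  exact (compat_iff_quadOK_of_support_eq_union hsupp).mpr
    (hadm _ (hconv.openSegment_subset hx hy hmid))
end

section
/- Let P ⊆ ℝ^{3n} be a set contained in the non-negative orthant, and let p ∈ P be a point satisfying the quadrilateral constraints. Then there exists an exposed face F of P with p ∈ F such that every point of F satisfies the quadrilateral constraints. -/
/-!
The points of a set inside the non-negative orthant whose support lies in a given set `S` form an
exposed face: minus the sum of the coordinates outside `S` is at most zero, and vanishes exactly at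
those points. With `S` the support of `p`, the face contains `p`, and it inherits the quadrilateral
constraints from `p`, because shrinking the support of a point preserves them.
-/

section Exposed

variable {𝕜 E ι : Type*} [TopologicalSpace 𝕜] [PartialOrder 𝕜]

theorem isExposed_setOf_eq_of_forall_le [Semiring 𝕜] [AddCommMonoid E] [TopologicalSpace E]
    [Module 𝕜 E] {A : Set E} {l : StrongDual 𝕜 E} {c : 𝕜} (hl : ∀ x ∈ A, l x ≤ c) :
    IsExposed 𝕜 A {x ∈ A | l x = c} := by
  rintro ⟨x₀, hx₀, hlx₀⟩
  refine ⟨l, Set.sep_ext_iff.mpr fun x hx => ⟨fun hlx y hy => ?_, fun hmax => ?_⟩⟩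
  · exact (hl y hy).trans_eq hlx.symm
  · exact (hl x hx).antisymm (hlx₀.symm.trans_le (hmax x₀ hx₀))

theorem isExposed_setOf_forall_eq_of_forall_le [Semiring 𝕜] [IsOrderedCancelAddMonoid 𝕜]
    [ContinuousAdd 𝕜] [AddCommMonoid E] [TopologicalSpace E] [Module 𝕜 E] {A : Set E}
    {s : Finset ι} {l : ι → StrongDual 𝕜 E} {c : ι → 𝕜} (hl : ∀ i ∈ s, ∀ x ∈ A, l i x ≤ c i) :
    IsExposed 𝕜 A {x ∈ A | ∀ i ∈ s, l i x = c i} := by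
  have sum_eq_iff (x) (hx : x ∈ A) :
      (∑ i ∈ s, l i) x = ∑ i ∈ s, c i ↔ ∀ i ∈ s, l i x = c i := by
    rw [sum_apply, Finset.sum_eq_sum_iff_of_le fun i hi => hl i hi x hx]
  rw [← Set.sep_ext_iff.mpr sum_eq_iff]
  refine isExposed_setOf_eq_of_forall_le fun x hx => ?_
  rw [sum_apply]
  exact Finset.sum_le_sum fun i hi => hl i hi x hx

theorem isExposed_setOf_support_subset [Ring 𝕜] [IsOrderedAddMonoid 𝕜] [IsTopologicalAddGroup 𝕜]
    [Finite ι] {A : Set (ι → 𝕜)} (hA : ∀ x ∈ A, 0 ≤ x) (S : Set ι) :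
    IsExposed 𝕜 A {x ∈ A | Function.support x ⊆ S} := by
  have exposed_vanishing := isExposed_setOf_forall_eq_of_forall_le (A := A)
    (s := Sᶜ.toFinite.toFinset) (l := fun i => -ContinuousLinearMap.proj (R := 𝕜) i) (c := 0)
    fun i _ x hx => neg_nonpos.mpr (hA x hx i)
  simpa only [Set.Finite.mem_toFinset, Set.mem_compl_iff, neg_apply,
    ContinuousLinearMap.proj_apply, Pi.zero_apply, neg_eq_zero, ← Function.support_subset_iff']
    using exposed_vanishing

end Exposed

theorem QuadOK.of_support_subset {n : ℕ} {x y : Fin n × Fin 3 → ℝ} (hy : QuadOK y)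
    (hxy : Function.support x ⊆ Function.support y) : QuadOK x :=
  fun i j j' hj hj' => hy i j j' (hxy hj) (hxy hj')

theorem stmt_10 {n : ℕ} (hn : 1 ≤ n) (P : Set (Fin n × Fin 3 → ℝ))
    (horth : P ⊆ Orthant n) (p : Fin n × Fin 3 → ℝ) (hp : p ∈ P)
    (hquad : QuadOK p) :
    ∃ F : Set (Fin n × Fin 3 → ℝ),
      IsExposed ℝ P F ∧ p ∈ F ∧ ∀ x ∈ F, QuadOK x :=
  ⟨{x ∈ P | Function.support x ⊆ Function.support p},
    isExposed_setOf_support_subset horth (Function.support p), ⟨hp, subset_rfl⟩,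
    fun _ hx => hquad.of_support_subset hx.2⟩
end

section
/- Let P ⊆ ℝ^{3n} be a set contained in the non-negative orthant. Then the set of points of P satisfying the quadrilateral constraints is exactly the union of the maximal admissible faces of P; in particular, every point of P satisfying the quadrilateral constraints belongs to some maximal admissible face of P. -/
/-!
If `x ∈ P` satisfies the quadrilateral constraints, then the points of `P` whose support lies in
that of `x` form an exposed face: on `P` the sum of the coordinates vanishing at `x` is
non-negative, and it is zero exactly there. Passing to a smaller support preserves the
constraints, so this face is admissible. An exposed face is cut out of `P` by its affine span, so
strict inclusions of non-empty exposed faces strictly increase the dimension; hence the face just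
found lies in a maximal admissible one.
-/

section ExposedFaces

variable {𝕜 E : Type*} [TopologicalSpace 𝕜] [Ring 𝕜] [PartialOrder 𝕜]
  [AddCommGroup E] [TopologicalSpace E] [Module 𝕜 E] {A B C : Set E}

lemma inter_affineSpan_eq_of_isExposed (hB : IsExposed 𝕜 A B) :
    A ∩ affineSpan 𝕜 B = B := by
  refine Set.Subset.antisymm ?_ (Set.subset_inter hB.subset (subset_affineSpan 𝕜 B))
  rintro y ⟨hyA, hyB⟩
  obtain ⟨x, hx⟩ := (affineSpan_nonempty 𝕜).1 ⟨y, hyB⟩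
  obtain ⟨l, rfl⟩ := hB ⟨x, hx⟩
  have hl : l y = l x := by
    refine affineSpan_induction (p := fun z => l z = l x) hyB ?_ ?_
    · exact fun z hz => le_antisymm (hx.2 z hz.1) (hz.2 x hx.1)
    · intro c u v w hu hv hw
      simp [hu, hv, hw]
  exact ⟨hyA, fun z hz => (hx.2 z hz).trans_eq hl.symm⟩

lemma subset_of_isExposed_of_vectorSpan_le (hB : IsExposed 𝕜 A B) (hne : B.Nonempty)
    (hCA : C ⊆ A) (hBC : B ⊆ C) (hle : vectorSpan 𝕜 C ≤ vectorSpan 𝕜 B) : C ⊆ B := by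
  have hspan : affineSpan 𝕜 B = affineSpan 𝕜 C := by
    refine AffineSubspace.eq_of_direction_eq_of_nonempty_of_le ?_ (hne.affineSpan 𝕜)
      (affineSpan_mono 𝕜 hBC)
    rw [direction_affineSpan, direction_affineSpan]
    exact (vectorSpan_mono 𝕜 hBC).antisymm hle
  rw [← inter_affineSpan_eq_of_isExposed hB, hspan]
  exact Set.subset_inter hCA (subset_affineSpan 𝕜 C)

lemma exists_subset_maximal_isExposed [IsNoetherian 𝕜 E] {Q : Set E → Prop}
    (hB : IsExposed 𝕜 A B) (hQ : Q B) (hne : B.Nonempty) :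
    ∃ C, B ⊆ C ∧ Maximal (fun F => IsExposed 𝕜 A F ∧ Q F) C := by
  obtain ⟨C, ⟨⟨hC, hQC⟩, hBC⟩, hmax⟩ := exists_maximalFor_of_wellFoundedGT
    (fun F => (IsExposed 𝕜 A F ∧ Q F) ∧ B ⊆ F) (vectorSpan 𝕜) ⟨B, ⟨hB, hQ⟩, subset_rfl⟩
  refine ⟨C, hBC, ⟨hC, hQC⟩, fun F hF hCF => ?_⟩
  exact subset_of_isExposed_of_vectorSpan_le hC (hne.mono hBC) hF.1.subset hCF
    (hmax ⟨hF, hBC.trans hCF⟩ (vectorSpan_mono 𝕜 hCF))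

variable [IsOrderedAddMonoid 𝕜] [IsTopologicalAddGroup 𝕜] {ι : Type*} {f : ι → StrongDual 𝕜 E}

lemma isExposed_setOf_forall_eq_zero {s : Set ι} (hs : s.Finite)
    (hf : ∀ i ∈ s, ∀ x ∈ A, 0 ≤ f i x) :
    IsExposed 𝕜 A {x ∈ A | ∀ i ∈ s, f i x = 0} := by
  lift s to Finset ι using hs
  simp only [Finset.mem_coe] at hf ⊢
  have sum_nonneg : ∀ x ∈ A, 0 ≤ ∑ i ∈ s, f i x := fun x hx =>
    Finset.sum_nonneg fun i hi => hf i hi x hx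
  have sum_eq_zero_iff : ∀ x ∈ A, ∑ i ∈ s, f i x = 0 ↔ ∀ i ∈ s, f i x = 0 := fun x hx =>
    Finset.sum_eq_zero_iff_of_nonneg fun i hi => hf i hi x hx
  rintro ⟨w, hwA, hw⟩
  refine ⟨-∑ i ∈ s, f i, Set.ext fun x => and_congr_right fun hx => ?_⟩
  simp only [neg_apply, sum_apply, neg_le_neg_iff]
  rw [← sum_eq_zero_iff x hx]
  constructor
  · intro hx0 y hy
    exact hx0.trans_le (sum_nonneg y hy)
  · intro hmin
    exact ((hmin w hwA).trans_eq (Finset.sum_eq_zero hw)).antisymm (sum_nonneg x hx)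

theorem stmt_12_general [IsNoetherian 𝕜 E] [Finite ι] (hf : ∀ i, ∀ x ∈ A, 0 ≤ f i x)
    {q : E → Prop} (hq : ∀ x ∈ A, ∀ y ∈ A, (∀ i, f i x = 0 → f i y = 0) → q x → q y) :
    {x ∈ A | q x} = ⋃₀ {F | Maximal (fun F => IsExposed 𝕜 A F ∧ ∀ x ∈ F, q x) F} := by
  refine Set.Subset.antisymm ?_ ?_
  · rintro x ⟨hxA, hqx⟩
    let B : Set E := {y ∈ A | ∀ i ∈ {i | f i x = 0}, f i y = 0}
    have hB : IsExposed 𝕜 A B :=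
      isExposed_setOf_forall_eq_zero (Set.toFinite _) fun i _ => hf i
    have hxB : x ∈ B := ⟨hxA, fun _ hi => hi⟩
    have hqB : ∀ y ∈ B, q y := fun y hy => hq x hxA y hy.1 hy.2 hqx
    obtain ⟨F, hBF, hF⟩ :=
      exists_subset_maximal_isExposed (Q := fun F => ∀ y ∈ F, q y) hB hqB ⟨x, hxB⟩
    exact ⟨F, hF, hBF hxB⟩
  · rintro x ⟨F, ⟨⟨hFA, hqF⟩, -⟩, hxF⟩
    exact ⟨hFA.subset hxF, hqF x hxF⟩

end ExposedFaces

lemma QuadOK.of_forall_eq_zero {n : ℕ} {x y : Fin n × Fin 3 → ℝ} (hx : QuadOK x)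
    (hxy : ∀ p, x p = 0 → y p = 0) : QuadOK y :=
  fun i j j' hj hj' => hx i j j' (mt (hxy (i, j)) hj) (mt (hxy (i, j')) hj')

lemma maxAdmFace_iff_maximal {n : ℕ} {P F : Set (Fin n × Fin 3 → ℝ)} :
    MaxAdmFace P F ↔ Maximal (AdmFace P) F := by
  rw [Set.maximal_iff_forall_ssuperset]
  exact and_congr_right fun _ => forall_congr' fun _ => imp_not_comm

theorem stmt_12 {n : ℕ} (hn : 1 ≤ n) (P : Set (Fin n × Fin 3 → ℝ))
    (horth : P ⊆ Orthant n) :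
    {x ∈ P | QuadOK x} = ⋃₀ {F : Set (Fin n × Fin 3 → ℝ) | MaxAdmFace P F} := by
  simp only [maxAdmFace_iff_maximal]
  exact stmt_12_general (f := ContinuousLinearMap.proj) (fun p _ hx => horth hx p)
    fun _ _ _ _ hxy hx => hx.of_forall_eq_zero hxy
end

section
/- Let V be a linear subspace of ℝ^{3n} of dimension at most 2n that contains all the tetrahedral solutions t¹, …, tⁿ, and let C = V ∩ (non-negative orthant). Then for each d ∈ {0, 1, …, n−1}, the number of maximal pairwise-compatible subsets of C whose linear span has dimension exactly d + 1 is at most 3^{n−1−d}; here a maximal pairwise-compatible subset of C is a subset of C consisting of pairwise compatible points that is not strictly contained in any other such subset of C. -/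
/-- The `k`th tetrahedral solution `t^k ∈ ℝ^{3n}`: the vector whose three
coordinates in tetrahedron `k` are `1` and whose other coordinates are `0`. -/
def tetSol {n : ℕ} (k : Fin n) : Fin n × Fin 3 → ℝ := fun p => if p.1 = k then 1 else 0

/-- `F` is a *maximal pairwise-compatible subset* of `C`: a subset of `C`
consisting of pairwise compatible points that is not strictly contained in any
other such subset of `C`. -/
def MaxCompatSubset {n : ℕ} (C F : Set (Fin n × Fin 3 → ℝ)) : Prop :=
  F ⊆ C ∧ (∀ x ∈ F, ∀ y ∈ F, Compat x y) ∧
    ∀ G : Set (Fin n × Fin 3 → ℝ), G ⊆ C → (∀ x ∈ G, ∀ y ∈ G, Compat x y) → ¬ F ⊂ G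

/-!
Write `T k j` for the points whose only possibly non-zero coordinate in tetrahedron `k` is `j`. A
pairwise-compatible set lies, for every `k`, in some `T k j`; so the maximal ones in `U ∩ S` are
distributed over the three branches `U ⊓ T k j`. If `t^k ∈ U`, every branch is a proper subspace.
If some `U ⊓ T k j` has codimension one, it is cut out of `U` by the vanishing of any single
coordinate `(k, l)` with `l ≠ j`; taking also `l ≠ j'`, this coordinate vanishes on `U ⊓ T k j'`, so
the branch `j` contains every branch `j'`. Otherwise there are three branches, all of codimension at
least two. Either way, an inequality `c * ∑ 3 ^ dim (span F) ≤ 3 ^ dim` valid on the branches,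
with the sum over the maximal sets `F`, holds on `U` with `3 * c` in place of `c`.
-/

open Module

section

variable {n : ℕ}

theorem MaxCompatSubset.of_subset {C C' F : Set (Fin n × Fin 3 → ℝ)} (hF : MaxCompatSubset C F)
    (hC : C' ⊆ C) (hFC : F ⊆ C') : MaxCompatSubset C' F :=
  ⟨hFC, hF.2.1, fun G hG => hF.2.2 G (hG.trans hC)⟩

theorem MaxCompatSubset.eq_of_pairwise_compat {C F : Set (Fin n × Fin 3 → ℝ)}
    (hF : MaxCompatSubset C F) (hC : ∀ x ∈ C, ∀ y ∈ C, Compat x y) : F = C :=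
  hF.1.eq_of_not_ssubset (hF.2.2 C subset_rfl hC)

/-- The subspace of points whose coordinates in tetrahedron `k` vanish, except possibly that of
quadrilateral type `j`. -/
def typeSubspace (k : Fin n) (j : Fin 3) : Submodule ℝ (Fin n × Fin 3 → ℝ) :=
  Submodule.pi {p | p.1 = k ∧ p.2 ≠ j} fun _ => ⊥

theorem mem_typeSubspace {k : Fin n} {j : Fin 3} {x : Fin n × Fin 3 → ℝ} :
    x ∈ typeSubspace k j ↔ ∀ l, l ≠ j → x (k, l) = 0 :=
  ⟨fun h l hl => h (k, l) ⟨rfl, hl⟩, by rintro h ⟨_, l⟩ ⟨rfl, hl⟩; exact h l hl⟩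

theorem tetSol_mem_typeSubspace {k l : Fin n} (hkl : k ≠ l) (j : Fin 3) :
    tetSol l ∈ typeSubspace k j :=
  mem_typeSubspace.2 fun _ _ => if_neg hkl

theorem pairwise_compat_iff {F : Set (Fin n × Fin 3 → ℝ)} :
    (∀ x ∈ F, ∀ y ∈ F, Compat x y) ↔ ∀ k : Fin n, ∃ j, F ⊆ typeSubspace k j := by
  constructor
  · intro hF k
    by_cases hzero : ∀ x ∈ F, ∀ j, x (k, j) = 0
    · exact ⟨0, fun x hx => mem_typeSubspace.2 fun l _ => hzero x hx l⟩
    · push Not at hzero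
      obtain ⟨x, hx, j, hxj⟩ := hzero
      refine ⟨j, fun y hy => mem_typeSubspace.2 fun l hl => ?_⟩
      by_contra hyl
      exact hl (hF x hx y hy k l j (.inr hyl) (.inl hxj))
  · intro hF x hx y hy k
    obtain ⟨j, hj⟩ := hF k
    have eq_type (l : Fin 3) (hl : x (k, l) ≠ 0 ∨ y (k, l) ≠ 0) : l = j := by
      by_contra hlj
      exact hl.elim (· (mem_typeSubspace.1 (hj hx) l hlj)) (· (mem_typeSubspace.1 (hj hy) l hlj))
    exact fun l l' hl hl' => (eq_type l hl).trans (eq_type l' hl').symm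

theorem MaxCompatSubset.exists_inf_typeSubspace {U : Submodule ℝ (Fin n × Fin 3 → ℝ)}
    {S F : Set (Fin n × Fin 3 → ℝ)} (hF : MaxCompatSubset (U ∩ S) F) (k : Fin n) :
    ∃ j, MaxCompatSubset (↑(U ⊓ typeSubspace k j) ∩ S) F := by
  obtain ⟨j, hj⟩ := pairwise_compat_iff.1 hF.2.1 k
  exact ⟨j, hF.of_subset (Set.inter_subset_inter_left S inf_le_left)
    fun x hx => ⟨⟨(hF.1 hx).1, hj hx⟩, (hF.1 hx).2⟩⟩

theorem inf_ker_proj_lt {U : Submodule ℝ (Fin n × Fin 3 → ℝ)} {k : Fin n} (ht : tetSol k ∈ U)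
    (l : Fin 3) :
    U ⊓ LinearMap.ker (LinearMap.proj (k, l) : (Fin n × Fin 3 → ℝ) →ₗ[ℝ] ℝ) < U :=
  inf_lt_left.2 fun h => by simpa [tetSol] using h ht

theorem typeSubspace_le_ker_proj {k : Fin n} {j l : Fin 3} (hl : l ≠ j) :
    typeSubspace k j ≤ LinearMap.ker (LinearMap.proj (k, l) : (Fin n × Fin 3 → ℝ) →ₗ[ℝ] ℝ) :=
  fun _ hx => mem_typeSubspace.1 hx l hl

theorem finrank_inf_typeSubspace_lt {U : Submodule ℝ (Fin n × Fin 3 → ℝ)} {k : Fin n}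
    (ht : tetSol k ∈ U) (j : Fin 3) : finrank ℝ ↥(U ⊓ typeSubspace k j) < finrank ℝ U := by
  obtain ⟨l, hl⟩ := exists_ne j
  exact Submodule.finrank_lt_finrank_of_lt
    ((inf_le_inf_left U (typeSubspace_le_ker_proj hl)).trans_lt (inf_ker_proj_lt ht l))

theorem inf_typeSubspace_le_of_finrank_le {U : Submodule ℝ (Fin n × Fin 3 → ℝ)} {k : Fin n}
    (ht : tetSol k ∈ U) {j : Fin 3}
    (hj : finrank ℝ U ≤ finrank ℝ ↥(U ⊓ typeSubspace k j) + 1) (j' : Fin 3) :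
    U ⊓ typeSubspace k j' ≤ U ⊓ typeSubspace k j := by
  obtain ⟨l, hlj, hlj'⟩ : ∃ l, l ≠ j ∧ l ≠ j' :=
    (by decide : ∀ a b : Fin 3, ∃ l, l ≠ a ∧ l ≠ b) j j'
  have hlt := Submodule.finrank_lt_finrank_of_lt (inf_ker_proj_lt ht l)
  have hcut := Submodule.eq_of_le_of_finrank_le
    (inf_le_inf_left U (typeSubspace_le_ker_proj (k := k) hlj)) (by omega)
  exact (inf_le_inf_left U (typeSubspace_le_ker_proj hlj')).trans_eq hcut.symm

/-- A Kraft-type inequality for the maximal pairwise-compatible subsets `F` of `U ∩ S`, each of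
weight `3 ^ dim (span F)`; `c` is the factor gained by branching over tetrahedra. It is stated for
all finite families of such subsets, so that it presupposes no finiteness. -/
def KraftBound (S : Set (Fin n × Fin 3 → ℝ)) (c : ℕ) (U : Submodule ℝ (Fin n × Fin 3 → ℝ)) :
    Prop :=
  ∀ s : Finset (Set (Fin n × Fin 3 → ℝ)), (∀ F ∈ s, MaxCompatSubset (U ∩ S) F) →
    (∑ F ∈ s, 3 ^ finrank ℝ (Submodule.span ℝ F)) * c ≤ 3 ^ finrank ℝ U

theorem kraftBound_one_of_le_typeSubspace (S : Set (Fin n × Fin 3 → ℝ))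
    {U : Submodule ℝ (Fin n × Fin 3 → ℝ)} (hU : ∀ k, ∃ j, U ≤ typeSubspace k j) :
    KraftBound S 1 U := by
  intro s hs
  have hcompat : ∀ x ∈ (U ∩ S : Set _), ∀ y ∈ (U ∩ S : Set _), Compat x y :=
    pairwise_compat_iff.2 fun k => (hU k).imp fun _ hj => Set.inter_subset_left.trans hj
  have hsub : s ⊆ {↑U ∩ S} := fun F hF =>
    Finset.mem_singleton.2 ((hs F hF).eq_of_pairwise_compat hcompat)
  have hspan : Submodule.span ℝ (U ∩ S : Set _) ≤ U :=
    Submodule.span_le.2 Set.inter_subset_left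
  calc (∑ F ∈ s, 3 ^ finrank ℝ (Submodule.span ℝ F)) * 1
      ≤ ∑ F ∈ {↑U ∩ S}, 3 ^ finrank ℝ (Submodule.span ℝ F) := by
        rw [mul_one]
        exact Finset.sum_le_sum_of_subset hsub
    _ = 3 ^ finrank ℝ (Submodule.span ℝ (U ∩ S : Set _)) := Finset.sum_singleton _ _
    _ ≤ 3 ^ finrank ℝ U := Nat.pow_le_pow_right three_pos (Submodule.finrank_mono hspan)

theorem KraftBound.of_codim_one {S : Set (Fin n × Fin 3 → ℝ)} {c : ℕ}
    {U : Submodule ℝ (Fin n × Fin 3 → ℝ)} {k : Fin n} (ht : tetSol k ∈ U) {j : Fin 3}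
    (hj : finrank ℝ U ≤ finrank ℝ ↥(U ⊓ typeSubspace k j) + 1)
    (hc : KraftBound S c (U ⊓ typeSubspace k j)) : KraftBound S (c * 3) U := by
  intro s hs
  have hbranch : ∀ F ∈ s, MaxCompatSubset (↑(U ⊓ typeSubspace k j) ∩ S) F := by
    intro F hF
    obtain ⟨j', hF'⟩ := (hs F hF).exists_inf_typeSubspace k
    exact (hs F hF).of_subset (Set.inter_subset_inter_left S inf_le_left)
      (hF'.1.trans (Set.inter_subset_inter_left S (inf_typeSubspace_le_of_finrank_le ht hj j')))
  calc (∑ F ∈ s, 3 ^ finrank ℝ (Submodule.span ℝ F)) * (c * 3)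
      = (∑ F ∈ s, 3 ^ finrank ℝ (Submodule.span ℝ F)) * c * 3 := (mul_assoc _ _ _).symm
    _ ≤ 3 ^ finrank ℝ ↥(U ⊓ typeSubspace k j) * 3 := Nat.mul_le_mul_right 3 (hc s hbranch)
    _ = 3 ^ (finrank ℝ ↥(U ⊓ typeSubspace k j) + 1) := (pow_succ _ _).symm
    _ ≤ 3 ^ finrank ℝ U := Nat.pow_le_pow_right three_pos (finrank_inf_typeSubspace_lt ht j)

theorem KraftBound.of_codim_two {S : Set (Fin n × Fin 3 → ℝ)} {c : ℕ}
    {U : Submodule ℝ (Fin n × Fin 3 → ℝ)} {k : Fin n}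
    (hU : ∀ j, finrank ℝ ↥(U ⊓ typeSubspace k j) + 2 ≤ finrank ℝ U)
    (hc : ∀ j, KraftBound S c (U ⊓ typeSubspace k j)) : KraftBound S (c * 3) U := by
  intro s hs
  choose! type htype using fun F hF => (hs F hF).exists_inf_typeSubspace k
  obtain ⟨r, hr⟩ := Nat.exists_eq_add_of_le' (le_of_add_le_right (hU 0))
  have hbranch (j : Fin 3) :
      (∑ F ∈ s with type F = j, 3 ^ finrank ℝ (Submodule.span ℝ F)) * c ≤ 3 ^ r := by
    refine (hc j _ fun F hF => ?_).trans (Nat.pow_le_pow_right three_pos (by have := hU j; omega))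
    obtain ⟨hFs, rfl⟩ := Finset.mem_filter.1 hF
    exact htype F hFs
  calc (∑ F ∈ s, 3 ^ finrank ℝ (Submodule.span ℝ F)) * (c * 3)
      = (∑ j, (∑ F ∈ s with type F = j, 3 ^ finrank ℝ (Submodule.span ℝ F)) * c) * 3 := by
        rw [← Finset.sum_mul, Finset.sum_fiberwise, mul_assoc]
    _ ≤ (∑ _j : Fin 3, 3 ^ r) * 3 :=
        Nat.mul_le_mul_right 3 (Finset.sum_le_sum fun j _ => hbranch j)
    _ = 3 ^ finrank ℝ U := by
        rw [hr, Finset.sum_const, Finset.card_univ, Fintype.card_fin, smul_eq_mul]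
        ring

theorem KraftBound.of_inf_typeSubspace {S : Set (Fin n × Fin 3 → ℝ)} {c : ℕ}
    {U : Submodule ℝ (Fin n × Fin 3 → ℝ)} {k : Fin n} (ht : tetSol k ∈ U)
    (hc : ∀ j, KraftBound S c (U ⊓ typeSubspace k j)) : KraftBound S (c * 3) U := by
  by_cases hU : ∃ j, finrank ℝ U ≤ finrank ℝ ↥(U ⊓ typeSubspace k j) + 1
  · obtain ⟨j, hj⟩ := hU
    exact of_codim_one ht hj (hc j)
  · push Not at hU
    exact of_codim_two hU hc

theorem kraftBound_three_pow_card (S : Set (Fin n × Fin 3 → ℝ)) (K : Finset (Fin n))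
    (U : Submodule ℝ (Fin n × Fin 3 → ℝ)) (ht : ∀ k ∈ K, tetSol k ∈ U)
    (hU : ∀ k ∉ K, ∃ j, U ≤ typeSubspace k j) : KraftBound S (3 ^ K.card) U := by
  induction K using Finset.induction generalizing U with
  | empty => exact kraftBound_one_of_le_typeSubspace S fun k => hU k (Finset.notMem_empty k)
  | insert k K hk ih =>
    rw [Finset.card_insert_of_notMem hk, pow_succ]
    refine .of_inf_typeSubspace (ht k (Finset.mem_insert_self k K)) fun j => ih _ ?_ ?_
    · intro l hl
      exact ⟨ht l (Finset.mem_insert_of_mem hl),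
        tetSol_mem_typeSubspace (ne_of_mem_of_not_mem hl hk).symm j⟩
    · intro l hl
      obtain rfl | hlk := eq_or_ne l k
      · exact ⟨j, inf_le_right⟩
      · exact (hU l (by simp [hl, hlk])).imp fun _ => inf_le_left.trans

theorem kraftBound_three_pow {V : Submodule ℝ (Fin n × Fin 3 → ℝ)}
    (S : Set (Fin n × Fin 3 → ℝ)) (htet : ∀ k, tetSol k ∈ V) : KraftBound S (3 ^ n) V := by
  simpa using kraftBound_three_pow_card S Finset.univ V (fun k _ => htet k) (by simp)

theorem finite_and_ncard_le_of_forall_finset_card_le {α : Type*} {A : Set α} {c : ℕ}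
    (h : ∀ s : Finset α, ↑s ⊆ A → s.card ≤ c) : A.Finite ∧ A.ncard ≤ c := by
  have hfin : A.Finite := by
    by_contra hinf
    obtain ⟨s, hsA, hs⟩ := Set.Infinite.exists_subset_card_eq hinf (c + 1)
    have := h s hsA
    omega
  refine ⟨hfin, ?_⟩
  rw [Set.ncard_eq_toFinset_card A hfin]
  exact h _ hfin.coe_toFinset.subset

theorem stmt_16_general {V : Submodule ℝ (Fin n × Fin 3 → ℝ)} (S : Set (Fin n × Fin 3 → ℝ))
    (htet : ∀ k, tetSol k ∈ V) {d m : ℕ} (hdim : finrank ℝ V ≤ n + d + m) :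
    {F | MaxCompatSubset (V ∩ S) F ∧ d ≤ finrank ℝ (Submodule.span ℝ F)}.Finite ∧
    {F | MaxCompatSubset (V ∩ S) F ∧ d ≤ finrank ℝ (Submodule.span ℝ F)}.ncard ≤ 3 ^ m := by
  refine finite_and_ncard_le_of_forall_finset_card_le fun s hs => ?_
  have hcard : s.card * 3 ^ d ≤ ∑ F ∈ s, 3 ^ finrank ℝ (Submodule.span ℝ F) :=
    Finset.card_nsmul_le_sum s _ _ fun F hF => Nat.pow_le_pow_right three_pos (hs hF).2
  refine Nat.le_of_mul_le_mul_right (c := 3 ^ d * 3 ^ n) ?_ (by positivity)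
  calc s.card * (3 ^ d * 3 ^ n)
      = s.card * 3 ^ d * 3 ^ n := (mul_assoc _ _ _).symm
    _ ≤ (∑ F ∈ s, 3 ^ finrank ℝ (Submodule.span ℝ F)) * 3 ^ n := Nat.mul_le_mul_right _ hcard
    _ ≤ 3 ^ finrank ℝ V := kraftBound_three_pow S htet s fun F hF => (hs hF).1
    _ ≤ 3 ^ (n + d + m) := Nat.pow_le_pow_right three_pos hdim
    _ = 3 ^ m * (3 ^ d * 3 ^ n) := by ring

end

theorem stmt_16 {n : ℕ} (hn : 1 ≤ n) (V : Submodule ℝ (Fin n × Fin 3 → ℝ))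
    (hdim : Module.finrank ℝ V ≤ 2 * n) (htet : ∀ k : Fin n, tetSol k ∈ V)
    (d : ℕ) (hd : d < n) :
    {F : Set (Fin n × Fin 3 → ℝ) |
        MaxCompatSubset (↑V ∩ Orthant n) F ∧
          Module.finrank ℝ (Submodule.span ℝ F) = d + 1}.Finite ∧
    {F : Set (Fin n × Fin 3 → ℝ) |
        MaxCompatSubset (↑V ∩ Orthant n) F ∧
          Module.finrank ℝ (Submodule.span ℝ F) = d + 1}.ncard ≤ 3 ^ (n - 1 - d) := by
  obtain ⟨hfin, hcard⟩ := stmt_16_general (Orthant n) htet (d := d + 1) (m := n - 1 - d) (by omega)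
  refine ⟨hfin.subset ?_, (Set.ncard_le_ncard ?_ hfin).trans hcard⟩ <;>
    exact fun F hF => ⟨hF.1, hF.2.ge⟩
end
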